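/- arXiv:2603.22069 — 8 statements merged into one kernel-verified Lean document; each statement's English description precedes it below -/
import Mathlib

section
/- Let ψ : [0,∞) → ℝ be a warping function satisfying the Cartan–Hadamard conditions, let n ≥ 2 be an integer, and define K_rad(r) = -ψ''(r)/ψ(r), K_tan(r) = -(ψ'(r)² − 1)/ψ(r)², and S(r) = 2(n−1)K_rad(r) + (n−1)(n−2)K_tan(r) for r > 0. If K_rad is monotone nondecreasing on (0,∞), then K_rad(r) ≥ K_tan(r) for every r > 0, K_tan is monotone nondecreasing on (0,∞), and S is monotone nondecreasing on (0,∞). If instead K_rad is monotone nonincreasing on (0,∞), then K_rad(r) ≤ K_tan(r) for every r > 0, K_tan is monotone nonincreasing, and S is monotone nonincreasing. -/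
/-- For a Cartan–Hadamard warping function ψ and n ≥ 2, if K_rad is
monotone nondecreasing on (0,∞) then K_rad ≥ K_tan on (0,∞), K_tan is monotone
nondecreasing, and the scalar curvature S is monotone nondecreasing; if K_rad is
monotone nonincreasing then the reversed conclusions hold. -/
theorem stmt_2 (n : ℕ) (hn : 2 ≤ n) (ψ : ℝ → ℝ)
    (hψ : ContDiffOn ℝ (⊤ : ℕ∞) ψ (Set.Ici 0))
    (hψ0 : ψ 0 = 0) (hψ'0 : deriv ψ 0 = 1) (hψpos : ∀ r > (0:ℝ), 0 < ψ r)
    (hψ'' : ∀ r ≥ (0:ℝ), 0 ≤ deriv (deriv ψ) r)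
    (Krad Ktan S : ℝ → ℝ)
    (hKrad : Krad = fun r => -(deriv (deriv ψ) r) / ψ r)
    (hKtan : Ktan = fun r => -((deriv ψ r) ^ 2 - 1) / (ψ r) ^ 2)
    (hS : S = fun r => 2 * ((n:ℝ) - 1) * Krad r + ((n:ℝ) - 1) * ((n:ℝ) - 2) * Ktan r) :
    (MonotoneOn Krad (Set.Ioi 0) →
      (∀ r > (0:ℝ), Ktan r ≤ Krad r) ∧
      MonotoneOn Ktan (Set.Ioi 0) ∧ MonotoneOn S (Set.Ioi 0)) ∧
    (AntitoneOn Krad (Set.Ioi 0) →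
      (∀ r > (0:ℝ), Krad r ≤ Ktan r) ∧
      AntitoneOn Ktan (Set.Ioi 0) ∧ AntitoneOn S (Set.Ioi 0)) := by
  have hdat0 : DifferentiableAt ℝ ψ 0 := by
    apply differentiableAt_of_deriv_ne_zero
    rw [hψ'0]; norm_num
  have hdat : ∀ x ≥ (0:ℝ), DifferentiableAt ℝ ψ x := by
    intro x hx
    rcases eq_or_lt_of_le hx with h | h
    · rw [← h]; exact hdat0
    · exact (hψ.differentiableOn (by simp) x hx).differentiableAt (Ici_mem_nhds h)
  have hpc : ContinuousOn (deriv ψ) (Set.Ici 0) := by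
    have h := hψ.continuousOn_derivWithin (uniqueDiffOn_Ici 0) (by simp)
    refine h.congr ?_
    intro x hx
    exact ((hdat x hx).derivWithin (uniqueDiffOn_Ici 0 x hx)).symm
  have hψc : ContinuousOn ψ (Set.Ici 0) := hψ.continuousOn
  have hpd : ∀ x > (0:ℝ), HasDerivAt (deriv ψ) (deriv (deriv ψ) x) x := by
    intro x hx
    have h1 : ContDiffOn ℝ 2 ψ (Set.Ioi 0) :=
      (contDiffOn_infty.1 hψ 2).mono Set.Ioi_subset_Ici_self
    have h2 : ContDiffOn ℝ 1 (deriv ψ) (Set.Ioi 0) :=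
      h1.deriv_of_isOpen isOpen_Ioi (by norm_num)
    exact ((h2.differentiableOn (by simp) x hx).differentiableAt (Ioi_mem_nhds hx)).hasDerivAt
  have hψd : ∀ x > (0:ℝ), HasDerivAt ψ (deriv ψ x) x := fun x hx => (hdat x hx.le).hasDerivAt
  have hpmono : MonotoneOn (deriv ψ) (Set.Ici 0) := by
    apply monotoneOn_of_deriv_nonneg (convex_Ici 0) hpc
    · rw [interior_Ici]
      exact fun x hx => (hpd x hx).differentiableAt.differentiableWithinAt
    · rw [interior_Ici]
      exact fun x hx => hψ'' x (le_of_lt hx)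
  have hp0 : ∀ x ≥ (0:ℝ), 0 ≤ deriv ψ x := by
    intro x hx
    have := hpmono (Set.self_mem_Ici) hx hx
    linarith
  have hGd : ∀ c : ℝ, ∀ x > (0:ℝ), HasDerivAt (fun s => (deriv ψ s)^2 - 1 + c * (ψ s)^2)
      (2 * deriv ψ x * (deriv (deriv ψ) x + c * ψ x)) x := by
    intro c x hx
    have h := (((hpd x hx).pow 2).sub_const 1).add (((hψd x hx).pow 2).const_mul c)
    refine HasDerivAt.congr_deriv (f := fun s => (deriv ψ s)^2 - 1 + c * (ψ s)^2) h ?_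
    simp
    ring
  have hGc : ∀ c r : ℝ, ContinuousOn (fun s => (deriv ψ s)^2 - 1 + c * (ψ s)^2)
      (Set.Icc 0 r) := by
    intro c r
    have h1 := hpc.mono (Set.Icc_subset_Ici_self : Set.Icc 0 r ⊆ _)
    have h2 := hψc.mono (Set.Icc_subset_Ici_self : Set.Icc 0 r ⊆ _)
    fun_prop
  have hKtd : ∀ x > (0:ℝ), HasDerivAt Ktan (2 * deriv ψ x / ψ x * (Krad x - Ktan x)) x := by
    intro x hx
    have hne := (hψpos x hx).ne'
    have h := (((hpd x hx).pow 2).sub_const 1).neg.div ((hψd x hx).pow 2) (pow_ne_zero 2 hne)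
    rw [hKtan, hKrad]
    refine HasDerivAt.congr_deriv (f := fun r => -((deriv ψ r) ^ 2 - 1) / (ψ r) ^ 2) h ?_
    simp
    field_simp
  have hKtc : ContinuousOn Ktan (Set.Ioi 0) :=
    fun x hx => (hKtd x hx).continuousAt.continuousWithinAt
  have hKtdo : DifferentiableOn ℝ Ktan (interior (Set.Ioi 0)) := by
    rw [interior_Ioi]
    exact fun x hx => (hKtd x hx).differentiableAt.differentiableWithinAt
  have hq : ∀ x > (0:ℝ), deriv (deriv ψ) x = - Krad x * ψ x := by
    intro x hx
    have hne := (hψpos x hx).ne'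
    rw [hKrad]; field_simp
  have ht : ∀ x > (0:ℝ), (deriv ψ x)^2 - 1 = - Ktan x * (ψ x)^2 := by
    intro x hx
    have hne := (hψpos x hx).ne'
    rw [hKtan]; field_simp
  have hn1 : (0:ℝ) ≤ (n:ℝ) - 1 := by
    have : (2:ℝ) ≤ n := by exact_mod_cast hn
    linarith
  have hn2 : (0:ℝ) ≤ (n:ℝ) - 2 := by
    have : (2:ℝ) ≤ n := by exact_mod_cast hn
    linarith
  constructor
  · intro hK
    have hA : ∀ r > (0:ℝ), Ktan r ≤ Krad r := by
      intro r hr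
      have hm : MonotoneOn (fun s => (deriv ψ s)^2 - 1 + Krad r * (ψ s)^2) (Set.Icc 0 r) := by
        apply monotoneOn_of_deriv_nonneg (convex_Icc 0 r) (hGc _ r)
        · rw [interior_Icc]
          exact fun x hx => (hGd _ x hx.1).differentiableAt.differentiableWithinAt
        · rw [interior_Icc]
          intro x hx
          rw [(hGd _ x hx.1).deriv, hq x hx.1]
          have h1 := hK (show x ∈ Set.Ioi 0 from hx.1) (show r ∈ Set.Ioi 0 from hr) hx.2.le
          have h2 := mul_nonneg (sub_nonneg.2 h1) (hψpos x hx.1).le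
          apply mul_nonneg (by linarith [hp0 x hx.1.le])
          linarith
      have h := hm (Set.left_mem_Icc.2 hr.le) (Set.right_mem_Icc.2 hr.le) hr.le
      simp only [hψ0, hψ'0, ht r hr] at h
      have h3 := pow_pos (hψpos r hr) 2
      nlinarith
    have hB : MonotoneOn Ktan (Set.Ioi 0) := by
      apply monotoneOn_of_deriv_nonneg (convex_Ioi 0) hKtc hKtdo
      rw [interior_Ioi]
      intro x hx
      rw [(hKtd x hx).deriv]
      exact mul_nonneg (div_nonneg (by linarith [hp0 x (le_of_lt hx)]) (hψpos x hx).le)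
        (sub_nonneg.2 (hA x hx))
    refine ⟨hA, hB, ?_⟩
    intro x hx y hy hxy
    have h1 := hK hx hy hxy
    have h2 := hB hx hy hxy
    rw [hS]
    dsimp only
    gcongr
  · intro hK
    have hA : ∀ r > (0:ℝ), Krad r ≤ Ktan r := by
      intro r hr
      have hm : AntitoneOn (fun s => (deriv ψ s)^2 - 1 + Krad r * (ψ s)^2) (Set.Icc 0 r) := by
        apply antitoneOn_of_deriv_nonpos (convex_Icc 0 r) (hGc _ r)
        · rw [interior_Icc]
          exact fun x hx => (hGd _ x hx.1).differentiableAt.differentiableWithinAt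
        · rw [interior_Icc]
          intro x hx
          rw [(hGd _ x hx.1).deriv, hq x hx.1]
          have h1 := hK (show x ∈ Set.Ioi 0 from hx.1) (show r ∈ Set.Ioi 0 from hr) hx.2.le
          have h2 := mul_nonneg (sub_nonneg.2 h1) (hψpos x hx.1).le
          apply mul_nonpos_of_nonneg_of_nonpos (by linarith [hp0 x hx.1.le])
          linarith
      have h := hm (Set.left_mem_Icc.2 hr.le) (Set.right_mem_Icc.2 hr.le) hr.le
      simp only [hψ0, hψ'0, ht r hr] at h
      have h3 := pow_pos (hψpos r hr) 2
      nlinarith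
    have hB : AntitoneOn Ktan (Set.Ioi 0) := by
      apply antitoneOn_of_deriv_nonpos (convex_Ioi 0) hKtc hKtdo
      rw [interior_Ioi]
      intro x hx
      rw [(hKtd x hx).deriv]
      exact mul_nonpos_of_nonneg_of_nonpos
        (div_nonneg (by linarith [hp0 x (le_of_lt hx)]) (hψpos x hx).le)
        (sub_nonpos.2 (hA x hx))
    refine ⟨hA, hB, ?_⟩
    intro x hx y hy hxy
    have h1 := hK hx hy hxy
    have h2 := hB hx hy hxy
    rw [hS]
    dsimp only
    gcongr
end

section
/- Let ψ : [0,∞) → ℝ be smooth with ψ(r) > 0 and ψ'(r) > 0 for all r > 0, and define K_rad(r) = -ψ''(r)/ψ(r) and K_tan(r) = -(ψ'(r)² − 1)/ψ(r)². If K_rad(r) ≤ K_tan(r) for every r > 0, then K_tan is monotone nonincreasing on (0,∞). -/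
/-- For a warping function ψ (smooth, with ψ > 0 and ψ' > 0 on (0,∞)),
if K_rad ≤ K_tan everywhere on (0,∞) then K_tan is monotone nonincreasing on (0,∞). -/
theorem stmt_4 (ψ : ℝ → ℝ) (hψ : ContDiffOn ℝ (⊤ : ℕ∞) ψ (Set.Ici 0))
    (hψ0 : ψ 0 = 0) (hψpos : ∀ r > (0:ℝ), 0 < ψ r)
    (hψ'pos : ∀ r > (0:ℝ), 0 < deriv ψ r)
    (Krad Ktan : ℝ → ℝ)
    (hKrad : Krad = fun r => -(deriv (deriv ψ) r) / ψ r)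
    (hKtan : Ktan = fun r => -((deriv ψ r) ^ 2 - 1) / (ψ r) ^ 2)
    (hle : ∀ r > (0:ℝ), Krad r ≤ Ktan r) :
    AntitoneOn Ktan (Set.Ioi 0) := by
  have hs : ContDiffOn ℝ (⊤ : ℕ∞) ψ (Set.Ioi 0) := hψ.mono Set.Ioi_subset_Ici_self
  have hd : ContDiffOn ℝ 1 (deriv ψ) (Set.Ioi 0) :=
    hs.deriv_of_isOpen isOpen_Ioi (WithTop.coe_le_coe.2 (le_top : (1 + 1 : ℕ∞) ≤ ⊤))
  have h1 : ∀ r > (0:ℝ), HasDerivAt ψ (deriv ψ r) r := fun r hr =>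
    ((hs.differentiableOn (by simp)).differentiableAt (Ioi_mem_nhds hr)).hasDerivAt
  have h2 : ∀ r > (0:ℝ), HasDerivAt (deriv ψ) (deriv (deriv ψ) r) r := fun r hr =>
    ((hd.differentiableOn (by simp)).differentiableAt (Ioi_mem_nhds hr)).hasDerivAt
  have h3 : ∀ r > (0:ℝ), HasDerivAt Ktan (2 * deriv ψ r / ψ r * (Krad r - Ktan r)) r := by
    intro r hr
    have hp := hψpos r hr
    have := (((h2 r hr).pow 2).sub_const 1).neg.div ((h1 r hr).pow 2) (pow_ne_zero 2 hp.ne')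
    rw [hKtan, hKrad]
    refine this.congr_deriv ?_
    simp only [Pi.neg_apply, Pi.pow_apply]
    field_simp
    push_cast
    ring
  refine antitoneOn_of_deriv_nonpos (convex_Ioi 0)
    (fun r hr => (h3 r hr).continuousAt.continuousWithinAt) ?_ ?_
  · rw [interior_Ioi]
    exact fun r hr => (h3 r hr).differentiableAt.differentiableWithinAt
  · rw [interior_Ioi]
    intro r hr
    rw [(h3 r hr).deriv]
    have hp := hψpos r hr
    have hq := hψ'pos r hr
    exact mul_nonpos_of_nonneg_of_nonpos (by positivity) (sub_nonpos.2 (hle r hr))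
end

section
/- Let n ≥ 2 be an integer and let ψ : (0,∞) → ℝ be smooth with ψ(r) > 0 and ψ'(r) > 0 for all r > 0. Set H(r) = (n−1)ψ'(r)/ψ(r) and K_rad(r) = -ψ''(r)/ψ(r). If K_rad is monotone nonincreasing on (0,∞) (i.e. K_rad'(r) ≤ 0 for all r > 0), then H' changes sign at most once on (0,∞): there do not exist 0 < r₁ < r₂ < r₃ with H'(r₁) > 0, H'(r₂) < 0, H'(r₃) > 0, nor with H'(r₁) < 0, H'(r₂) > 0, H'(r₃) < 0. -/
/-- If the radial sectional curvature K_rad = -ψ''/ψ is monotone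
nonincreasing on (0,∞) (K_rad' ≤ 0), then the derivative of the mean curvature
H = (n-1)ψ'/ψ changes sign at most once on (0,∞). -/
theorem stmt_6 (n : ℕ) (hn : 2 ≤ n) (ψ : ℝ → ℝ)
    (hψ : ContDiffOn ℝ (⊤ : ℕ∞) ψ (Set.Ioi 0))
    (hψpos : ∀ r > (0:ℝ), 0 < ψ r)
    (hψ'pos : ∀ r > (0:ℝ), 0 < deriv ψ r)
    (H Krad : ℝ → ℝ)
    (hH : H = fun r => ((n:ℝ) - 1) * deriv ψ r / ψ r)
    (hKrad : Krad = fun r => -(deriv (deriv ψ) r) / ψ r)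
    (hKdec : ∀ r > (0:ℝ), deriv Krad r ≤ 0) :
    (¬ ∃ r₁ r₂ r₃ : ℝ, 0 < r₁ ∧ r₁ < r₂ ∧ r₂ < r₃ ∧
        0 < deriv H r₁ ∧ deriv H r₂ < 0 ∧ 0 < deriv H r₃) ∧
    (¬ ∃ r₁ r₂ r₃ : ℝ, 0 < r₁ ∧ r₁ < r₂ ∧ r₂ < r₃ ∧
        deriv H r₁ < 0 ∧ 0 < deriv H r₂ ∧ deriv H r₃ < 0) := by
  have hn1 : (0:ℝ) < (n:ℝ) - 1 := by
    have : (2:ℝ) ≤ n := by exact_mod_cast hn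
    linarith
  have h0 : ContDiffOn ℝ ((⊤ : ℕ∞) : WithTop ℕ∞) (deriv ψ) (Set.Ioi 0) :=
    hψ.deriv_of_isOpen isOpen_Ioi (by exact_mod_cast le_top)
  have h1 : ContDiffOn ℝ ((⊤ : ℕ∞) : WithTop ℕ∞) (deriv (deriv ψ)) (Set.Ioi 0) :=
    h0.deriv_of_isOpen isOpen_Ioi (by exact_mod_cast le_top)
  have d0 : ∀ r > (0:ℝ), HasDerivAt ψ (deriv ψ r) r := fun r hr =>
    ((hψ.differentiableOn (by simp)).differentiableAt (Ioi_mem_nhds hr)).hasDerivAt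
  have d1 : ∀ r > (0:ℝ), HasDerivAt (deriv ψ) (deriv (deriv ψ) r) r := fun r hr =>
    ((h0.differentiableOn (by simp)).differentiableAt (Ioi_mem_nhds hr)).hasDerivAt
  have d2 : ∀ r > (0:ℝ), HasDerivAt (deriv (deriv ψ)) (deriv (deriv (deriv ψ)) r) r :=
    fun r hr =>
    ((h1.differentiableOn (by simp)).differentiableAt (Ioi_mem_nhds hr)).hasDerivAt
  obtain ⟨G, hG⟩ : ∃ G : ℝ → ℝ, G = fun r => deriv (deriv ψ) r * ψ r - deriv ψ r * deriv ψ r :=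
    ⟨_, rfl⟩
  have dG : ∀ r > (0:ℝ), HasDerivAt G
      (deriv (deriv (deriv ψ)) r * ψ r - deriv (deriv ψ) r * deriv ψ r) r := by
    intro r hr
    rw [hG]
    exact (((d2 r hr).mul (d0 r hr)).sub ((d1 r hr).mul (d1 r hr))).congr_deriv (by ring)
  have dG0 : ∀ r > (0:ℝ),
      0 ≤ deriv (deriv (deriv ψ)) r * ψ r - deriv (deriv ψ) r * deriv ψ r := by
    intro r hr
    have hp := hψpos r hr
    have e : HasDerivAt Krad ((-deriv (deriv (deriv ψ)) r * ψ r -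
        (-deriv (deriv ψ) r) * deriv ψ r) / (ψ r) ^ 2) r := by
      rw [hKrad]
      exact (d2 r hr).neg.div (d0 r hr) hp.ne'
    have h := hKdec r hr
    rw [e.deriv, div_le_iff₀ (by positivity)] at h
    linarith
  have mono : MonotoneOn G (Set.Ioi 0) := by
    apply monotoneOn_of_deriv_nonneg (convex_Ioi 0)
    · exact fun r hr => (dG r hr).continuousAt.continuousWithinAt
    · rw [interior_Ioi]
      exact fun r hr => (dG r hr).differentiableAt.differentiableWithinAt
    · rw [interior_Ioi]
      intro r hr
      rw [(dG r hr).deriv]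
      exact dG0 r hr
  have dH : ∀ r > (0:ℝ), deriv H r = ((n:ℝ) - 1) / (ψ r) ^ 2 * G r := by
    intro r hr
    have e : HasDerivAt H ((((n:ℝ) - 1) * deriv (deriv ψ) r * ψ r -
        ((n:ℝ) - 1) * deriv ψ r * deriv ψ r) / (ψ r) ^ 2) r := by
      rw [hH]
      exact ((d1 r hr).const_mul ((n:ℝ) - 1)).div (d0 r hr) (hψpos r hr).ne'
    rw [e.deriv, hG]
    ring
  have key : ∀ a b : ℝ, 0 < a → a < b → 0 < deriv H a → deriv H b < 0 → False := by
    intro a b ha hab hA hB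
    have hb := ha.trans hab
    have hpa := hψpos a ha
    have hpb := hψpos b hb
    rw [dH a ha] at hA
    rw [dH b hb] at hB
    have hm : G a ≤ G b := mono ha hb hab.le
    have hGa : 0 < G a := pos_of_mul_pos_right hA (by positivity)
    have : 0 < ((n:ℝ) - 1) / (ψ b) ^ 2 * G b := mul_pos (by positivity) (by linarith)
    linarith
  constructor
  · rintro ⟨r₁, r₂, r₃, p1, p2, p3, q1, q2, q3⟩
    exact key r₁ r₂ p1 p2 q1 q2
  · rintro ⟨r₁, r₂, r₃, p1, p2, p3, q1, q2, q3⟩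
    exact key r₂ r₃ (p1.trans p2) p3 q2 q3
end

section
/- Let ψ : [0,∞) → ℝ be smooth with ψ(0) = 0, ψ'(0) = 1, and ψ(r) > 0 for r > 0, and define K_rad(r) = -ψ''(r)/ψ(r). If K_rad is monotone nondecreasing on (0,∞) (i.e. K_rad'(r) ≥ 0 for all r > 0), then the function r ↦ ψ'(r)/ψ(r) is monotone nonincreasing on (0,∞). In particular, the quantity ψ'(r)² + K_rad(r) ψ(r)² is monotone nondecreasing on [0,∞) with value 1 at r = 0, hence ψ'(r)² + K_rad(r)ψ(r)² ≥ 1 > 0 for all r > 0. -/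
/-- For a warping function ψ with ψ(0)=0, ψ'(0)=1, ψ>0 on (0,∞), if
K_rad = -ψ''/ψ is monotone nondecreasing on (0,∞), then ψ'/ψ is monotone
nonincreasing on (0,∞); moreover ψ'² + K_rad ψ² is monotone nondecreasing on
[0,∞) with value 1 at r = 0, hence ψ'(r)² + K_rad(r) ψ(r)² ≥ 1 > 0 for r > 0. -/
theorem stmt_7 (ψ : ℝ → ℝ) (hψ : ContDiffOn ℝ (⊤ : ℕ∞) ψ (Set.Ici 0))
    (hψ0 : ψ 0 = 0) (hψ'0 : deriv ψ 0 = 1) (hψpos : ∀ r > (0:ℝ), 0 < ψ r)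
    (Krad : ℝ → ℝ)
    (hKrad : Krad = fun r => -(deriv (deriv ψ) r) / ψ r)
    (hmono : MonotoneOn Krad (Set.Ioi 0)) :
    AntitoneOn (fun r => deriv ψ r / ψ r) (Set.Ioi 0) ∧
    MonotoneOn (fun r => (deriv ψ r) ^ 2 + Krad r * (ψ r) ^ 2) (Set.Ici 0) ∧
    (deriv ψ 0) ^ 2 + Krad 0 * (ψ 0) ^ 2 = 1 ∧
    ∀ r > (0:ℝ), 1 ≤ (deriv ψ r) ^ 2 + Krad r * (ψ r) ^ 2 := by
  have hU : UniqueDiffOn ℝ (Set.Ici (0:ℝ)) := uniqueDiffOn_Ici 0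
  have hi1 : ContDiffOn ℝ (⊤ : ℕ∞) (deriv ψ) (Set.Ioi 0) :=
    (hψ.mono Set.Ioi_subset_Ici_self).deriv_of_isOpen isOpen_Ioi (by simp)
  have hi2 : ContDiffOn ℝ (⊤ : ℕ∞) (deriv (deriv ψ)) (Set.Ioi 0) :=
    hi1.deriv_of_isOpen isOpen_Ioi (by simp)
  have hat : ∀ r > (0:ℝ), ContDiffAt ℝ (⊤ : ℕ∞) ψ r := fun r hr =>
    hψ.contDiffAt (Ici_mem_nhds hr)
  have hat1 : ∀ r > (0:ℝ), ContDiffAt ℝ (⊤ : ℕ∞) (deriv ψ) r := fun r hr =>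
    (hi1 : ContDiffOn ℝ (⊤ : ℕ∞) (deriv ψ) (Set.Ioi 0)).contDiffAt (Ioi_mem_nhds hr)
  have hat2 : ∀ r > (0:ℝ), ContDiffAt ℝ (⊤ : ℕ∞) (deriv (deriv ψ)) r := fun r hr =>
    hi2.contDiffAt (Ioi_mem_nhds hr)
  have h1 : ∀ r > (0:ℝ), HasDerivAt ψ (deriv ψ r) r := fun r hr =>
    ((hat r hr).differentiableAt (by simp)).hasDerivAt
  have h2 : ∀ r > (0:ℝ), HasDerivAt (deriv ψ) (deriv (deriv ψ) r) r := fun r hr =>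
    ((hat1 r hr).differentiableAt (by simp)).hasDerivAt
  have h3 : ∀ r > (0:ℝ), HasDerivAt (deriv (deriv ψ)) (deriv (deriv (deriv ψ)) r) r := fun r hr =>
    ((hat2 r hr).differentiableAt (by simp)).hasDerivAt
  have hd0 : DifferentiableAt ℝ ψ 0 := by
    by_contra h
    rw [deriv_zero_of_not_differentiableAt h] at hψ'0
    exact zero_ne_one hψ'0
  set f := derivWithin ψ (Set.Ici 0) with hf
  set g := derivWithin f (Set.Ici 0) with hg
  have hfc : ContDiffOn ℝ (⊤ : ℕ∞) f (Set.Ici 0) := hψ.derivWithin hU (by simp)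
  have hgc : ContDiffOn ℝ (⊤ : ℕ∞) g (Set.Ici 0) := hfc.derivWithin hU (by simp)
  have hfpos : ∀ r > (0:ℝ), f r = deriv ψ r := fun r hr =>
    derivWithin_of_mem_nhds (Ici_mem_nhds hr)
  have hf0 : f 0 = deriv ψ 0 := hd0.derivWithin (hU 0 (by simp))
  have hgpos : ∀ r > (0:ℝ), g r = deriv (deriv ψ) r := fun r hr => by
    rw [hg, derivWithin_of_mem_nhds (Ici_mem_nhds hr)]
    apply Filter.EventuallyEq.deriv_eq
    filter_upwards [Ioi_mem_nhds hr] with x hx using hfpos x hx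
  have hQcont : ContinuousOn (fun r => (deriv ψ r) ^ 2 + Krad r * (ψ r) ^ 2) (Set.Ici 0) := by
    have : ContinuousOn (fun r => f r ^ 2 - g r * ψ r) (Set.Ici 0) :=
      (hfc.continuousOn.pow 2).sub (hgc.continuousOn.mul hψ.continuousOn)
    refine this.congr ?_
    intro r hr
    rcases eq_or_lt_of_le (Set.mem_Ici.1 hr) with h | h
    · subst h
      simp [hψ0, hf0]
    · have := hψpos r h
      simp only [hKrad, hfpos r h, hgpos r h]
      field_simp
      ring
  have hKd : ∀ r > (0:ℝ), HasDerivAt Krad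
      ((-(deriv (deriv (deriv ψ)) r) * ψ r - -(deriv (deriv ψ) r) * deriv ψ r) / ψ r ^ 2) r := by
    intro r hr
    rw [hKrad]
    exact (h3 r hr).neg.div (h1 r hr) (hψpos r hr).ne'
  have hKnn : ∀ r > (0:ℝ), 0 ≤ deriv Krad r := by
    intro r hr
    rw [← derivWithin_of_mem_nhds (Ioi_mem_nhds hr)]
    exact hmono.derivWithin_nonneg
  have hQd : ∀ r > (0:ℝ), HasDerivAt (fun r => (deriv ψ r) ^ 2 + Krad r * (ψ r) ^ 2)
      (deriv Krad r * ψ r ^ 2) r := by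
    intro r hr
    have hK := (hKd r hr).differentiableAt.hasDerivAt
    have := ((h2 r hr).pow 2).add (hK.mul ((h1 r hr).pow 2))
    refine this.congr_deriv ?_
    have hp := hψpos r hr
    have hk : Krad r = -(deriv (deriv ψ) r) / ψ r := by rw [hKrad]
    have hk' : deriv (deriv ψ) r = - Krad r * ψ r := by
      rw [hk]; field_simp
    simp only [Pi.pow_apply]
    rw [hk']
    push_cast
    ring
  have hQ0 : (deriv ψ 0) ^ 2 + Krad 0 * (ψ 0) ^ 2 = 1 := by simp [hψ0, hψ'0]
  have hQmono : MonotoneOn (fun r => (deriv ψ r) ^ 2 + Krad r * (ψ r) ^ 2) (Set.Ici 0) := by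
    refine monotoneOn_of_deriv_nonneg (convex_Ici 0) hQcont ?_ ?_
    · rw [interior_Ici]
      exact fun r hr => (hQd r hr).differentiableAt.differentiableWithinAt
    · rw [interior_Ici]
      intro r hr
      rw [(hQd r hr).deriv]
      exact mul_nonneg (hKnn r hr) (sq_nonneg _)
  have hQ1 : ∀ r > (0:ℝ), 1 ≤ (deriv ψ r) ^ 2 + Krad r * (ψ r) ^ 2 := by
    intro r hr
    have := hQmono (Set.mem_Ici.2 le_rfl) (Set.mem_Ici.2 (le_of_lt hr)) (le_of_lt hr)
    simp only [hQ0] at this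
    exact this
  refine ⟨?_, hQmono, hQ0, hQ1⟩
  have hH : ∀ r > (0:ℝ), HasDerivAt (fun r => deriv ψ r / ψ r)
      ((deriv (deriv ψ) r * ψ r - deriv ψ r * deriv ψ r) / ψ r ^ 2) r := fun r hr =>
    (h2 r hr).div (h1 r hr) (hψpos r hr).ne'
  refine antitoneOn_of_deriv_nonpos (convex_Ioi 0)
    (fun r hr => (hH r hr).continuousAt.continuousWithinAt) ?_ ?_
  · rw [interior_Ioi]
    exact fun r hr => (hH r hr).differentiableAt.differentiableWithinAt
  · rw [interior_Ioi]
    intro r hr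
    rw [(hH r hr).deriv]
    apply div_nonpos_of_nonpos_of_nonneg _ (sq_nonneg _)
    have hp := hψpos r hr
    have hq := hQ1 r hr
    have hk : Krad r * ψ r ^ 2 = -(deriv (deriv ψ) r * ψ r) := by
      rw [hKrad]; field_simp
    rw [hk] at hq
    nlinarith
end

section
/- Let n ≥ 2 be an integer and let ψ : [0,∞) → ℝ be a warping function satisfying the Cartan–Hadamard conditions. Then the isoperimetric quotient of centered geodesic balls, Q(r) = ψ(r)^{n(n−1)} / (∫₀^r ψ(t)^{n−1} dt)^{n−1}, is a monotone nondecreasing function of r on (0,∞). -/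
/-- For a Cartan–Hadamard warping function ψ and n ≥ 2, the
isoperimetric quotient of centered geodesic balls
Q(r) = ψ(r)^{n(n-1)} / (∫₀^r ψ^{n-1})^{n-1} is monotone nondecreasing on (0,∞). -/
theorem stmt_9 (n : ℕ) (hn : 2 ≤ n) (ψ : ℝ → ℝ)
    (hψ : ContDiffOn ℝ (⊤ : ℕ∞) ψ (Set.Ici 0))
    (hψ0 : ψ 0 = 0) (hψ'0 : deriv ψ 0 = 1) (hψpos : ∀ r > (0:ℝ), 0 < ψ r)
    (hψ'' : ∀ r ≥ (0:ℝ), 0 ≤ deriv (deriv ψ) r) :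
    MonotoneOn
      (fun r => ψ r ^ (n * (n - 1)) / (∫ t in (0:ℝ)..r, ψ t ^ (n - 1)) ^ (n - 1))
      (Set.Ioi 0) := by
  have hd0 : DifferentiableAt ℝ ψ 0 := by
    by_contra h
    rw [deriv_zero_of_not_differentiableAt h] at hψ'0
    norm_num at hψ'0
  have hca : ∀ r > (0:ℝ), ContDiffAt ℝ (⊤ : ℕ∞) ψ r := fun r hr =>
    hψ.contDiffAt (Ici_mem_nhds hr)
  have hd : ∀ r ≥ (0:ℝ), DifferentiableAt ℝ ψ r := by
    intro r hr
    rcases hr.eq_or_lt with h | h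
    · rw [← h]; exact hd0
    · exact (hca r h).differentiableAt (by simp)
  have hdd : ∀ r > (0:ℝ), DifferentiableAt ℝ (deriv ψ) r := by
    intro r hr
    have hon : ContDiffOn ℝ (⊤ : ℕ∞) ψ (Set.Ioi 0) := hψ.mono Set.Ioi_subset_Ici_self
    have h2 : ContDiffOn ℝ 1 (deriv ψ) (Set.Ioi 0) :=
      hon.deriv_of_isOpen isOpen_Ioi (by
        rw [show (1 : WithTop ℕ∞) + 1 = ((2 : ℕ∞) : WithTop ℕ∞) by norm_num]
        exact_mod_cast le_top)
    exact (h2.contDiffAt (Ioi_mem_nhds hr)).differentiableAt (by simp)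
  have hdc : ContinuousOn (deriv ψ) (Set.Ici 0) := by
    have h1 : ContinuousOn (derivWithin ψ (Set.Ici 0)) (Set.Ici 0) :=
      hψ.continuousOn_derivWithin (uniqueDiffOn_Ici 0) (by exact_mod_cast le_top)
    refine h1.congr fun x hx => ?_
    exact ((hd x hx).derivWithin (uniqueDiffOn_Ici 0 x hx)).symm
  have hc : ContinuousOn ψ (Set.Ici 0) := hψ.continuousOn
  have hcp : ContinuousOn (fun t => ψ t ^ (n - 1)) (Set.Ici 0) := hc.pow _
  have hint : ∀ r ≥ (0:ℝ), IntervalIntegrable (fun t => ψ t ^ (n - 1)) MeasureTheory.volume 0 r := by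
    intro r hr
    apply ContinuousOn.intervalIntegrable
    rw [Set.uIcc_of_le hr]
    exact hcp.mono Set.Icc_subset_Ici_self
  set V : ℝ → ℝ := fun r => ∫ t in (0:ℝ)..r, ψ t ^ (n - 1) with hV
  have hVpos : ∀ r > (0:ℝ), 0 < V r := by
    intro r hr
    exact intervalIntegral.intervalIntegral_pos_of_pos_on (hint r hr.le)
      (fun x hx => pow_pos (hψpos x hx.1) _) hr
  have hVd : ∀ r > (0:ℝ), HasDerivAt V (ψ r ^ (n - 1)) r := by
    intro r hr
    refine intervalIntegral.integral_hasDerivAt_right (hint r hr.le) ?_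
      (hcp.continuousAt (Ici_mem_nhds hr))
    exact (hcp.mono Set.Ioi_subset_Ici_self).stronglyMeasurableAtFilter isOpen_Ioi r hr
  have hV0 : V 0 = 0 := by simp [hV]
  have hVc : ContinuousOn V (Set.Ici 0) := by
    intro r hr
    have h1 : ContinuousOn V (Set.Icc 0 (r + 1)) := by
      have hr' : (0:ℝ) ≤ r + 1 := by have : (0:ℝ) ≤ r := hr; linarith
      have := intervalIntegral.continuousOn_primitive_interval'
        (hint (r + 1) hr') (a := 0) (by simp)
      rwa [Set.uIcc_of_le hr'] at this
    have h2 := h1 r ⟨hr, by linarith⟩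
    refine h2.mono_of_mem_nhdsWithin ?_
    rw [← Set.Ici_inter_Iic]
    exact Filter.inter_mem self_mem_nhdsWithin
      (mem_nhdsWithin_of_mem_nhds (Iic_mem_nhds (by linarith)))
  have hG : MonotoneOn (fun r => n * deriv ψ r * V r - ψ r ^ n) (Set.Ici 0) := by
    refine monotoneOn_of_hasDerivWithinAt_nonneg (convex_Ici 0)
      (f' := fun r => n * deriv (deriv ψ) r * V r) ?_ ?_ ?_
    · exact ((continuousOn_const.mul hdc).mul hVc).sub (hc.pow _)
    · intro x hx
      rw [interior_Ici] at hx
      have hx' : (0:ℝ) < x := hx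
      have := (((hdd x hx').hasDerivAt.const_mul (n:ℝ)).mul (hVd x hx')).sub
        ((hd x hx'.le).hasDerivAt.pow n)
      refine (this.congr_deriv ?_).hasDerivWithinAt
      ring
    · intro x hx
      rw [interior_Ici] at hx
      have hx' : (0:ℝ) < x := hx
      exact mul_nonneg (mul_nonneg (Nat.cast_nonneg _) (hψ'' x hx'.le)) (hVpos x hx').le
  have hG0 : ∀ r > (0:ℝ), ψ r ^ n ≤ n * deriv ψ r * V r := by
    intro r hr
    have h := hG (Set.mem_Ici.2 le_rfl) (Set.mem_Ici.2 hr.le) hr.le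
    simp only [hV0, hψ0, mul_zero, zero_pow (show n ≠ 0 by omega), sub_zero] at h
    linarith
  have hF : MonotoneOn (fun r => ψ r ^ n / V r) (Set.Ioi 0) := by
    have hder : ∀ x > (0:ℝ), HasDerivAt (fun r => ψ r ^ n / V r)
        ((n * ψ x ^ (n - 1) * deriv ψ x * V x - ψ x ^ n * ψ x ^ (n - 1)) / V x ^ 2) x :=
      fun x hx => ((hd x hx.le).hasDerivAt.pow n).div (hVd x hx) (hVpos x hx).ne'
    refine monotoneOn_of_hasDerivWithinAt_nonneg (convex_Ioi 0)
      (fun x hx => (hder x hx).continuousAt.continuousWithinAt)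
      (fun x hx => (hder x (interior_subset hx)).hasDerivWithinAt) ?_
    intro x hx
    have hx' : (0:ℝ) < x := interior_subset hx
    apply div_nonneg _ (sq_nonneg _)
    have := mul_le_mul_of_nonneg_right (hG0 x hx') (pow_pos (hψpos x hx') (n - 1)).le
    linarith
  intro a ha b hb hab
  have h := pow_le_pow_left₀
    (div_nonneg (pow_pos (hψpos a ha) n).le (hVpos a ha).le) (hF ha hb hab) (n - 1)
  simpa only [div_pow, ← pow_mul] using h
end

section
/- Let n ≥ 2 be an integer and let ψ : [0,∞) → ℝ be a warping function satisfying the Cartan–Hadamard conditions. Then for every r ≥ 0, ψ(r)^n ≥ n ∫₀^r ψ(t)^{n−1} dt. In particular, every geodesic ball centered at the pole of the warped product manifold with warping function ψ satisfies the Euclidean isoperimetric inequality Per(B_r)ⁿ ≥ nⁿ |B(0,1)| Vol(B_r)^{n−1}, where Per(B_r) = ω_n ψ(r)^{n−1}, Vol(B_r) = ω_n ∫₀^r ψ(t)^{n−1} dt, ω_n = n|B(0,1)|, and |B(0,1)| is the Euclidean volume of the unit ball in ℝⁿ. -/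
/-- For a Cartan–Hadamard warping function ψ and n ≥ 2,
ψ(r)^n ≥ n ∫₀^r ψ^{n-1} for every r ≥ 0; in particular, with Per(B_r) = ω_n ψ(r)^{n-1},
Vol(B_r) = ω_n ∫₀^r ψ^{n-1} and ω_n = n |B(0,1)|, every centered geodesic ball
satisfies the Euclidean isoperimetric inequality Per(B_r)^n ≥ n^n |B(0,1)| Vol(B_r)^{n-1}. -/
theorem stmt_10 (n : ℕ) (hn : 2 ≤ n) (ψ : ℝ → ℝ)
    (hψ : ContDiffOn ℝ (⊤ : ℕ∞) ψ (Set.Ici 0))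
    (hψ0 : ψ 0 = 0) (hψ'0 : deriv ψ 0 = 1) (hψpos : ∀ r > (0:ℝ), 0 < ψ r)
    (hψ'' : ∀ r ≥ (0:ℝ), 0 ≤ deriv (deriv ψ) r)
    (B ωn : ℝ) (hB : 0 < B) (hω : ωn = (n:ℝ) * B) :
    (∀ r ≥ (0:ℝ), (n:ℝ) * ∫ t in (0:ℝ)..r, ψ t ^ (n - 1) ≤ ψ r ^ n) ∧
    (∀ r ≥ (0:ℝ),
      (n:ℝ) ^ n * B * (ωn * ∫ t in (0:ℝ)..r, ψ t ^ (n - 1)) ^ (n - 1)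
        ≤ (ωn * ψ r ^ (n - 1)) ^ n) := by
  have hS : UniqueDiffOn ℝ (Set.Ici (0:ℝ)) := uniqueDiffOn_Ici 0
  have hd0 : DifferentiableAt ℝ ψ 0 := by
    by_contra h
    rw [deriv_zero_of_not_differentiableAt h] at hψ'0
    norm_num at hψ'0
  have hdiff : ∀ r ≥ (0:ℝ), DifferentiableAt ℝ ψ r := by
    intro r hr
    rcases hr.lt_or_eq with h | h
    · exact ((hψ.differentiableOn (by simp)) r hr).differentiableAt (Ici_mem_nhds h)
    · rw [← h]; exact hd0
  have heq : Set.EqOn (deriv ψ) (derivWithin ψ (Set.Ici 0)) (Set.Ici 0) := fun r hr =>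
    ((hdiff r hr).derivWithin (hS r hr)).symm
  have hD : ContDiffOn ℝ 1 (derivWithin ψ (Set.Ici 0)) (Set.Ici 0) :=
    hψ.derivWithin hS (WithTop.coe_le_coe.2 (le_top : (1 + 1 : ℕ∞) ≤ ⊤))
  have hD' : ContDiffOn ℝ 1 (deriv ψ) (Set.Ici 0) := hD.congr heq
  have hmono : MonotoneOn (deriv ψ) (Set.Ici 0) := by
    apply monotoneOn_of_deriv_nonneg (convex_Ici 0) hD'.continuousOn
    · exact (hD'.differentiableOn (by simp)).mono interior_subset
    · intro x hx
      exact hψ'' x (interior_subset hx)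
  have hge : ∀ r ≥ (0:ℝ), 1 ≤ deriv ψ r := by
    intro r hr
    rw [← hψ'0]
    exact hmono (Set.mem_Ici.2 le_rfl) hr hr
  have hnn : ∀ r ≥ (0:ℝ), 0 ≤ ψ r := by
    intro r hr
    rcases hr.lt_or_eq with h | h
    · exact (hψpos r h).le
    · rw [← h, hψ0]
  have hc : ContinuousOn ψ (Set.Ici 0) := hψ.continuousOn
  have hmain : ∀ r ≥ (0:ℝ), (n:ℝ) * ∫ t in (0:ℝ)..r, ψ t ^ (n - 1) ≤ ψ r ^ n := by
    intro r hr
    have hsub : Set.uIcc 0 r ⊆ Set.Ici (0:ℝ) := by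
      rw [Set.uIcc_of_le hr]; exact Set.Icc_subset_Ici_self
    have hcr := hc.mono hsub
    have hcd := hD'.continuousOn.mono hsub
    have hi : IntervalIntegrable (fun t => (n:ℝ) * ψ t ^ (n - 1) * deriv ψ t)
        MeasureTheory.volume 0 r :=
      ((continuousOn_const.mul (hcr.pow _)).mul hcd).intervalIntegrable
    have hft : ∫ t in (0:ℝ)..r, (n:ℝ) * ψ t ^ (n - 1) * deriv ψ t = ψ r ^ n - ψ 0 ^ n := by
      apply intervalIntegral.integral_eq_sub_of_hasDerivAt (f := fun t => ψ t ^ n) _ hi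
      intro x hx
      exact (hdiff x (hsub hx)).hasDerivAt.pow n
    rw [hψ0, zero_pow (by omega), sub_zero] at hft
    rw [← hft, ← intervalIntegral.integral_const_mul]
    apply intervalIntegral.integral_mono_on hr _ hi
    · intro x hx
      have h1 := hge x hx.1
      have h2 : 0 ≤ (n:ℝ) * ψ x ^ (n - 1) :=
        mul_nonneg (Nat.cast_nonneg n) (pow_nonneg (hnn x hx.1) _)
      exact le_mul_of_one_le_right h2 h1
    · exact (continuousOn_const.mul (hcr.pow _)).intervalIntegrable
  refine ⟨hmain, ?_⟩
  intro r hr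
  have h := hmain r hr
  have hI : 0 ≤ ∫ t in (0:ℝ)..r, ψ t ^ (n - 1) :=
    intervalIntegral.integral_nonneg hr fun x hx => pow_nonneg (hnn x hx.1) _
  generalize (∫ t in (0:ℝ)..r, ψ t ^ (n - 1)) = I at h hI ⊢
  have h1 : ((n:ℝ) * I) ^ (n - 1) ≤ (ψ r ^ n) ^ (n - 1) :=
    pow_le_pow_left₀ (mul_nonneg (Nat.cast_nonneg n) hI) h _
  have hω0 : 0 ≤ ωn := by rw [hω]; positivity
  have e1 : (ωn * ψ r ^ (n - 1)) ^ n = ωn ^ n * (ψ r ^ n) ^ (n - 1) := by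
    rw [mul_pow, pow_right_comm]
  have e2 : (n:ℝ) ^ n * B * (ωn * I) ^ (n - 1) = ωn ^ n * ((n:ℝ) * I) ^ (n - 1) := by
    have hB2 : B ^ n = B * B ^ (n - 1) := by
      rw [← pow_succ']; congr 1; omega
    rw [hω, mul_pow (n:ℝ) B n, hB2]
    simp only [mul_pow]
    ring
  rw [e1, e2]
  exact mul_le_mul_of_nonneg_left h1 (pow_nonneg hω0 n)
end

section
/- Let n ≥ 2 be an integer and let ψ : [0,∞) → ℝ be a warping function satisfying the Cartan–Hadamard conditions. Then the function f(r) = (∫₀^r ψ(t)^{n−1} dt)/rⁿ is monotone nondecreasing on (0,∞), and consequently the isoperimetric quotient I(r) = ψ(r)^{n−1} / ∫₀^r ψ(t)^{n−1} dt satisfies I(r) ≥ n/r for all r > 0. -/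
/-- For a Cartan–Hadamard warping function ψ and n ≥ 2, the function
f(r) = (∫₀^r ψ^{n-1})/r^n is monotone nondecreasing on (0,∞), and consequently the
isoperimetric quotient I(r) = ψ(r)^{n-1}/∫₀^r ψ^{n-1} satisfies I(r) ≥ n/r for r > 0. -/
theorem stmt_11 (n : ℕ) (hn : 2 ≤ n) (ψ : ℝ → ℝ)
    (hψ : ContDiffOn ℝ (⊤ : ℕ∞) ψ (Set.Ici 0))
    (hψ0 : ψ 0 = 0) (hψ'0 : deriv ψ 0 = 1) (hψpos : ∀ r > (0:ℝ), 0 < ψ r)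
    (hψ'' : ∀ r ≥ (0:ℝ), 0 ≤ deriv (deriv ψ) r) :
    MonotoneOn (fun r => (∫ t in (0:ℝ)..r, ψ t ^ (n - 1)) / r ^ n) (Set.Ioi 0) ∧
    ∀ r > (0:ℝ), (n:ℝ) / r ≤ ψ r ^ (n - 1) / ∫ t in (0:ℝ)..r, ψ t ^ (n - 1) := by
  obtain ⟨m, rfl⟩ : ∃ m, n = m + 1 := ⟨n - 1, by omega⟩
  simp only [Nat.add_sub_cancel]
  have hcont : ContinuousOn ψ (Set.Ici 0) := hψ.continuousOn
  have hIoi : ContDiffOn ℝ (⊤ : ℕ∞) ψ (Set.Ioi 0) := hψ.mono Set.Ioi_subset_Ici_self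
  have hd1 : DifferentiableOn ℝ ψ (Set.Ioi 0) := hIoi.differentiableOn (by simp)
  have hd2 : DifferentiableOn ℝ (deriv ψ) (Set.Ioi 0) := by
    have h2 : ContDiffOn ℝ 1 (deriv ψ) (Set.Ioi 0) :=
      hIoi.deriv_of_isOpen isOpen_Ioi (by
        have h3 : ((2 : ℕ∞) : WithTop ℕ∞) ≤ ((⊤ : ℕ∞) : WithTop ℕ∞) := WithTop.coe_le_coe.2 le_top
        have h4 : (1 + 1 : WithTop ℕ∞) = ((2 : ℕ∞) : WithTop ℕ∞) := by norm_num
        rw [h4]; exact h3)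
    exact h2.differentiableOn (by simp)
  have hconv : ConvexOn ℝ (Set.Ici 0) ψ := by
    apply convexOn_of_deriv2_nonneg (convex_Ici 0) hcont
    · simpa using hd1
    · simpa using hd2
    · intro x hx
      simp only [interior_Ici, Set.mem_Ioi] at hx
      exact hψ'' x hx.le
  have hnn : ∀ t, 0 ≤ t → 0 ≤ ψ t := by
    intro t ht
    rcases ht.eq_or_lt with h | h
    · rw [← h, hψ0]
    · exact (hψpos t h).le
  have key : ∀ s t : ℝ, 0 ≤ s → s ≤ 1 → 0 ≤ t → ψ (s * t) ≤ s * ψ t := by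
    intro s t hs hs1 ht
    have := hconv.2 (Set.mem_Ici.2 ht) (Set.mem_Ici.2 le_rfl) hs (sub_nonneg.2 hs1) (by ring)
    simpa [hψ0] using this
  have hint : ∀ r, 0 ≤ r → IntervalIntegrable (fun t => ψ t ^ m) MeasureTheory.volume 0 r := by
    intro r hr
    apply ContinuousOn.intervalIntegrable
    rw [Set.uIcc_of_le hr]
    exact (hcont.mono Set.Icc_subset_Ici_self).pow m
  constructor
  · intro a ha b hb hab
    simp only [Set.mem_Ioi] at ha hb
    show _ / _ ≤ _ / _
    have hs0 : 0 < a / b := div_pos ha hb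
    have hs1 : a / b ≤ 1 := (div_le_one hb).2 hab
    have hsub : (∫ t in (0:ℝ)..a, ψ t ^ m) = (a / b) * ∫ t in (0:ℝ)..b, ψ (a / b * t) ^ m := by
      have := intervalIntegral.mul_integral_comp_mul_left (a := 0) (b := b)
        (f := fun t => ψ t ^ m) (a / b)
      rw [this]
      congr 1
      · simp
      · field_simp
    have hle : (∫ t in (0:ℝ)..b, ψ (a / b * t) ^ m) ≤
        ∫ t in (0:ℝ)..b, (a / b) ^ m * ψ t ^ m := by
      apply intervalIntegral.integral_mono_on hb.le
      · apply ContinuousOn.intervalIntegrable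
        rw [Set.uIcc_of_le hb.le]
        apply ContinuousOn.pow
        apply hcont.comp (by fun_prop)
        intro t ht
        exact Set.mem_Ici.2 (mul_nonneg hs0.le ht.1)
      · exact (hint b hb.le).const_mul _
      · intro t ht
        rw [← mul_pow]
        exact pow_le_pow_left₀ (hnn _ (mul_nonneg hs0.le ht.1)) (key _ _ hs0.le hs1 ht.1) m
    rw [intervalIntegral.integral_const_mul] at hle
    rw [hsub, div_le_iff₀ (by positivity)]
    calc _ ≤ (a / b) * ((a / b) ^ m * ∫ t in (0:ℝ)..b, ψ t ^ m) :=
          mul_le_mul_of_nonneg_left hle hs0.le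
      _ = _ := by rw [div_pow]; field_simp; ring
  · intro r hr
    have hpos : 0 < ∫ t in (0:ℝ)..r, ψ t ^ m :=
      intervalIntegral.intervalIntegral_pos_of_pos_on (hint r hr.le)
        (fun t ht => pow_pos (hψpos t ht.1) m) hr
    have hle : (∫ t in (0:ℝ)..r, ψ t ^ m) ≤ ∫ t in (0:ℝ)..r, t ^ m * (ψ r / r) ^ m := by
      apply intervalIntegral.integral_mono_on hr.le (hint r hr.le)
      · exact Continuous.intervalIntegrable (by fun_prop) _ _
      · intro t ht
        rw [← mul_pow]
        apply pow_le_pow_left₀ (hnn t ht.1)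
        have := key (t / r) r (div_nonneg ht.1 hr.le) ((div_le_one hr).2 ht.2) hr.le
        rw [div_mul_cancel₀ _ hr.ne'] at this
        exact this.trans_eq (by ring)
    rw [intervalIntegral.integral_mul_const, integral_pow] at hle
    rw [div_le_div_iff₀ hr hpos]
    have hm : (0:ℝ) < (m:ℝ) + 1 := by positivity
    calc _ ≤ ((m + 1 : ℕ) : ℝ) * ((r ^ (m + 1) - 0 ^ (m + 1)) / (m + 1) * (ψ r / r) ^ m) :=
          mul_le_mul_of_nonneg_left hle (by positivity)
      _ = _ := by
        have : r ≠ 0 := hr.ne'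
        push_cast
        rw [div_pow, zero_pow (by omega)]
        field_simp
        ring
end

section
/- Let n ≥ 2 be an integer and let ψ : [0,∞) → ℝ be a warping function satisfying the Cartan–Hadamard conditions, and suppose in addition that the radial sectional curvature K_rad(r) = -ψ''(r)/ψ(r) is monotone nondecreasing on (0,∞). Then the isoperimetric quotient I(r) = ψ(r)^{n−1} / ∫₀^r ψ(t)^{n−1} dt is monotone nonincreasing on (0,∞). -/
theorem aux_mono {F F' : ℝ → ℝ} {s : Set ℝ} (hs : Convex ℝ s) (hc : ContinuousOn F s)
    (hd : ∀ t ∈ interior s, HasDerivAt F (F' t) t) (h0 : ∀ t ∈ interior s, 0 ≤ F' t) :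
    MonotoneOn F s := by
  apply monotoneOn_of_deriv_nonneg hs hc
  · intro t ht
    exact (hd t ht).differentiableAt.differentiableWithinAt
  · intro t ht
    rw [(hd t ht).deriv]
    exact h0 t ht

theorem aux_prim (f : ℝ → ℝ) (hf : ContinuousOn f (Set.Ici 0)) :
    ∃ W : ℝ → ℝ, W 0 = 0 ∧ (∀ t ≥ (0:ℝ), HasDerivAt W (f t) t) ∧
      ∀ r ≥ (0:ℝ), ∫ t in (0:ℝ)..r, f t = W r := by
  have hg : Continuous (fun t => f (max t 0)) := by
    apply hf.comp_continuous (by fun_prop)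
    intro x
    exact le_max_right x 0
  refine ⟨fun r => ∫ t in (0:ℝ)..r, f (max t 0), by simp, ?_, ?_⟩
  · intro t ht
    have := hg.integral_hasStrictDerivAt 0 t
    simpa [max_eq_left ht] using this.hasDerivAt
  · intro r hr
    apply intervalIntegral.integral_congr
    intro t ht
    rw [Set.uIcc_of_le hr] at ht
    simp [max_eq_left ht.1]

/-- For a Cartan–Hadamard warping function ψ and n ≥ 2, if the radial
sectional curvature K_rad = -ψ''/ψ is monotone nondecreasing on (0,∞), then the
isoperimetric quotient I(r) = ψ(r)^{n-1}/∫₀^r ψ^{n-1} is monotone nonincreasing on (0,∞). -/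
theorem stmt_12 (n : ℕ) (hn : 2 ≤ n) (ψ : ℝ → ℝ)
    (hψ : ContDiffOn ℝ (⊤ : ℕ∞) ψ (Set.Ici 0))
    (hψ0 : ψ 0 = 0) (hψ'0 : deriv ψ 0 = 1) (hψpos : ∀ r > (0:ℝ), 0 < ψ r)
    (hψ'' : ∀ r ≥ (0:ℝ), 0 ≤ deriv (deriv ψ) r)
    (Krad : ℝ → ℝ)
    (hKrad : Krad = fun r => -(deriv (deriv ψ) r) / ψ r)
    (hmono : MonotoneOn Krad (Set.Ioi 0)) :
    AntitoneOn (fun r => ψ r ^ (n - 1) / ∫ t in (0:ℝ)..r, ψ t ^ (n - 1))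
      (Set.Ioi 0) := by
  obtain ⟨j, rfl⟩ : ∃ j, n = j + 2 := ⟨n - 2, by omega⟩
  have e : j + 2 - 1 = j + 1 := rfl
  rw [e]
  have hc : ContinuousOn ψ (Set.Ici 0) := hψ.continuousOn
  have hcd : ∀ t > (0:ℝ), ContDiffAt ℝ (⊤ : ℕ∞) ψ t := fun t ht =>
    hψ.contDiffAt (Ici_mem_nhds ht)
  have hd1 : ∀ t > (0:ℝ), HasDerivAt ψ (deriv ψ t) t := fun t ht =>
    ((hcd t ht).differentiableAt (by simp)).hasDerivAt
  have hd2 : ∀ t > (0:ℝ), HasDerivAt (deriv ψ) (deriv (deriv ψ) t) t := by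
    intro t ht
    have h1 : ContDiffOn ℝ (⊤ : ℕ∞) ψ (Set.Ioi 0) := hψ.mono Set.Ioi_subset_Ici_self
    have h2 : ContDiffOn ℝ 1 (deriv ψ) (Set.Ioi 0) :=
      h1.deriv_of_isOpen isOpen_Ioi (by norm_cast)
    exact ((h2.contDiffAt (Ioi_mem_nhds ht)).differentiableAt (by simp)).hasDerivAt
  have hc1 : ContinuousOn (deriv ψ) (Set.Ici 0) := by
    have h1 := hψ.continuousOn_derivWithin (uniqueDiffOn_Ici 0) (by simp)
    refine h1.congr ?_
    intro t ht
    have hdt : DifferentiableAt ℝ ψ t := by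
      rcases eq_or_lt_of_le (show (0:ℝ) ≤ t from ht) with h | h
      · subst h
        exact differentiableAt_of_deriv_ne_zero (by rw [hψ'0]; norm_num)
      · exact (hd1 t h).differentiableAt
    exact (hdt.derivWithin (uniqueDiffOn_Ici 0 t ht)).symm
  have hp1 : ∀ t ≥ (0:ℝ), 1 ≤ deriv ψ t := by
    intro t ht
    have := aux_mono (convex_Ici 0) hc1 (F' := deriv (deriv ψ))
      (by intro t ht; rw [interior_Ici] at ht; exact hd2 t ht)
      (by intro t ht; rw [interior_Ici] at ht; exact hψ'' t (le_of_lt ht))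
    rw [← hψ'0]
    exact this (Set.self_mem_Ici) ht ht
  have hnn : ∀ t ≥ (0:ℝ), 0 ≤ ψ t := by
    intro t ht
    rcases eq_or_lt_of_le ht with h | h
    · rw [← h, hψ0]
    · exact (hψpos t h).le
  obtain ⟨W, hW0, hW, hWV⟩ := aux_prim (fun t => ψ t ^ (j+1)) (hc.pow _)
  have hWc : ContinuousOn W (Set.Ici 0) := fun t ht =>
    (hW t ht).continuousAt.continuousWithinAt
  have hWpos : ∀ t > (0:ℝ), 0 < W t := by
    intro t ht
    rw [← hW0]
    refine strictMonoOn_of_deriv_pos (convex_Ici 0) hWc ?_ Set.self_mem_Ici ht.le ht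
    intro x hx
    rw [interior_Ici] at hx
    rw [(hW x (le_of_lt hx)).deriv]
    exact pow_pos (hψpos x hx) _
  -- key inequality
  have key : ∀ R > (0:ℝ), (j+1) * deriv (deriv ψ) R * W R ≤ ψ R ^ (j+1) * deriv ψ R := by
    intro R hR
    obtain ⟨c, hcdef⟩ : ∃ c, c = deriv (deriv ψ) R / ψ R := ⟨_, rfl⟩
    have hcR : deriv (deriv ψ) R = c * ψ R := by
      rw [hcdef, div_mul_cancel₀ _ (hψpos R hR).ne']
    have hk : ∀ t ∈ Set.Ioo 0 R, c * ψ t ≤ deriv (deriv ψ) t := by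
      intro t ht
      have h := hmono (show t ∈ Set.Ioi 0 from ht.1) hR ht.2.le
      simp only [hKrad, neg_div] at h
      have h' : c ≤ deriv (deriv ψ) t / ψ t := by rw [hcdef]; linarith
      rwa [le_div_iff₀ (hψpos t ht.1)] at h'
    have hsub : Set.Icc 0 R ⊆ Set.Ici 0 := fun x hx => hx.1
    have hH : MonotoneOn (fun t => deriv ψ t ^ 2 - c * ψ t ^ 2) (Set.Icc 0 R) := by
      apply aux_mono (convex_Icc 0 R)
        (F' := fun t => 2 * deriv ψ t * (deriv (deriv ψ) t - c * ψ t))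
      · exact ((hc1.mono hsub).pow 2).sub (continuousOn_const.mul ((hc.mono hsub).pow 2))
      · intro t ht
        rw [interior_Icc] at ht
        refine (((hd2 t ht.1).pow 2).sub (((hd1 t ht.1).pow 2).const_mul c)).congr_deriv ?_
        push_cast
        ring
      · intro t ht
        rw [interior_Icc] at ht
        have := hk t ht
        have := hp1 t ht.1.le
        apply mul_nonneg <;> linarith
    have hH' : ∀ t ∈ Set.Ioo 0 R, c * ψ t ^ 2 ≤ deriv ψ t ^ 2 := by
      intro t ht
      have := hH ⟨le_rfl, hR.le⟩ ⟨ht.1.le, ht.2.le⟩ ht.1.le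
      simp only [hψ0, hψ'0] at this
      linarith
    have hG : MonotoneOn (fun t => ψ t ^ j * deriv ψ t - (j+1) * c * W t) (Set.Icc 0 R) := by
      apply aux_mono (convex_Icc 0 R)
        (F' := fun t => (j * ψ t ^ (j-1) * deriv ψ t) * deriv ψ t
          + ψ t ^ j * deriv (deriv ψ) t - (j+1) * c * ψ t ^ (j+1))
      · exact (((hc.mono hsub).pow j).mul (hc1.mono hsub)).sub
          (continuousOn_const.mul (hWc.mono hsub))
      · intro t ht
        rw [interior_Icc] at ht
        exact (((hd1 t ht.1).pow j).mul (hd2 t ht.1)).sub ((hW t ht.1.le).const_mul _)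
      · intro t ht
        rw [interior_Icc] at ht
        have h0 := hψpos t ht.1
        have h1 := mul_le_mul_of_nonneg_left (hk t ht) (pow_pos h0 j).le
        have h2 : (j:ℝ) * c * ψ t ^ (j+1) ≤ (j * ψ t ^ (j-1) * deriv ψ t) * deriv ψ t := by
          rcases j with _ | i
          · simp
          · have := mul_le_mul_of_nonneg_left (hH' t ht)
              (show (0:ℝ) ≤ ((i+1 : ℕ):ℝ) * ψ t ^ i by positivity)
            simp only [Nat.add_sub_cancel]
            calc _ = ((i+1 : ℕ):ℝ) * ψ t ^ i * (c * ψ t ^ 2) := by ring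
              _ ≤ _ := this
              _ = _ := by ring
        have h3 : ψ t ^ j * (c * ψ t) = c * ψ t ^ (j+1) := by ring
        nlinarith
    have h := hG ⟨le_rfl, hR.le⟩ ⟨hR.le, le_rfl⟩ hR.le
    simp only [hψ0, hψ'0, hW0] at h
    have h0 : (0:ℝ) ≤ 0 ^ j := by positivity
    have h1 : 0 ≤ ψ R ^ j * deriv ψ R - (j+1) * c * W R := by linarith
    have h2 := mul_nonneg (hψpos R hR).le h1
    rw [hcR, pow_succ]
    linarith
  have hF : MonotoneOn (fun t => ψ t ^ (j+2) - (j+1) * (deriv ψ t * W t)) (Set.Ici 0) := by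
    apply aux_mono (convex_Ici 0)
      (F' := fun t => ψ t ^ (j+1) * deriv ψ t - (j+1) * deriv (deriv ψ) t * W t)
    · exact (hc.pow _).sub (continuousOn_const.mul (hc1.mul hWc))
    · intro t ht
      rw [interior_Ici] at ht
      refine (((hd1 t ht).pow (j+2)).sub
        (((hd2 t ht).mul (hW t (le_of_lt ht))).const_mul ((j:ℝ)+1))).congr_deriv ?_
      simp only [e]
      push_cast
      ring
    · intro t ht
      rw [interior_Ici] at ht
      have := key t ht
      linarith
  have hF0 : ∀ t > (0:ℝ), (j+1) * (deriv ψ t * W t) ≤ ψ t ^ (j+2) := by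
    intro t ht
    have := hF Set.self_mem_Ici ht.le ht.le
    simp [hψ0, hW0] at this
    linarith
  have hQ : MonotoneOn (fun t => -(ψ t ^ (j+1) / W t)) (Set.Ioi 0) := by
    have hder : ∀ t > (0:ℝ), HasDerivAt (fun t => -(ψ t ^ (j+1) / W t))
        (-((((j+1:ℕ):ℝ) * ψ t ^ j * deriv ψ t * W t - ψ t ^ (j+1) * ψ t ^ (j+1)) / W t ^ 2)) t :=
      fun t ht => (((hd1 t ht).pow (j+1)).div (hW t ht.le) (hWpos t ht).ne').neg
    refine aux_mono (convex_Ioi 0) (fun t ht => (hder t ht).continuousAt.continuousWithinAt)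
      (fun t ht => hder t (by simpa using ht)) ?_
    intro t ht
    rw [interior_Ioi] at ht
    rw [← neg_div]
    apply div_nonneg _ (sq_nonneg _)
    have := mul_le_mul_of_nonneg_left (hF0 t ht) (pow_pos (hψpos t ht) j).le
    push_cast
    have h3 : ψ t ^ (j+1) * ψ t ^ (j+1) = ψ t ^ j * ψ t ^ (j+2) := by ring
    rw [h3]
    linarith
  intro a ha b hb hab
  have := hQ ha hb hab
  simp only [] at this ⊢
  rw [hWV a (le_of_lt ha), hWV b (le_of_lt hb)]
  linarith
end
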